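/- Kirchhoff's matrix tree theorem via pseudo-determinants: Let G be a connected finite simple graph on a vertex set V with |V| = m ≥ 1 and let L be its Laplacian matrix (degree matrix minus adjacency matrix, over ℝ). Then (−1)^{m−1} times the coefficient of x^1 in the characteristic polynomial det(x·I − L) equals m times the number of spanning trees of G, where a spanning tree is a simple graph H on the vertex set V with H ≤ G (every edge of H is an edge of G) such that H is connected and acyclic. (The left-hand side is the pseudo-determinant Det(L), the product of the m−1 nonzero eigenvalues of L.) -/

import Mathlib

/-!
The coefficient of `x` in the characteristic polynomial is, up to sign, the sum of the `m` principal
`(m-1) × (m-1)` minors of `L`, so it suffices that the minor obtained by deleting a vertex `v`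
counts spanning trees (`minor_lapMatrix`).

That minor is the determinant of `L` with row `v` replaced by the unit vector `e_v`. For `i ≠ v`,
row `i` of `L` is the sum of `e_i - e_w` over the neighbours `w` of `i`. Multilinearity in the rows
therefore writes the minor as a sum, over all functions `f` with `f v = v` which send each `i ≠ v`
to a neighbour, of the determinant of the matrix with rows `e_i - e_{f i}` (and `e_v` at `v`). If
every vertex reaches `v` under iteration of `f`, only the identity permutation contributes and the
determinant is `1` (`det_parentMatrix_of_reaches`). Otherwise the indicator vector of the vertices
that never reach `v` lies in the kernel and the determinant is `0`
(`det_parentMatrix_of_not_reaches`).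

The surviving functions are the parent maps of the spanning trees rooted at `v`: joining each `i`
to `f i` gives a bijection onto the spanning trees (`bijOn_parentGraph`).
-/

open Matrix

namespace KirchhoffPdet

variable {V : Type*}

/-- Every vertex is sent to `v` by some iterate of `f`. -/
def Reaches (v : V) (f : V → V) : Prop := ∀ i, ∃ n : ℕ, f^[n] i = v

/-- `f` is the parent map of a spanning tree of `G` rooted at `v`, the root being its own parent. -/
def IsParentMap (G : SimpleGraph V) (v : V) (f : V → V) : Prop :=
  f v = v ∧ (∀ i, i ≠ v → G.Adj i (f i)) ∧ Reaches v f

/-- The graph joining each vertex `i` to `f i`, with loops discarded. -/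
def parentGraph (f : V → V) : SimpleGraph V := SimpleGraph.fromRel fun a b => f a = b

/-- The matrix whose row `i` is `e_i - e_{f i}` for `i ≠ v`, and `e_v` for `i = v`. -/
def parentMatrix [DecidableEq V] (v : V) (f : V → V) : Matrix V V ℝ :=
  Matrix.of fun i j => (if i = j then 1 else 0) - (if i ≠ v ∧ f i = j then 1 else 0)

lemma Reaches.mem_of_mapsTo {v : V} {f : V → V} (hf : Reaches v f) {S : Set V}
    (hS : Set.MapsTo f S S) {i : V} (hi : i ∈ S) : v ∈ S := by
  obtain ⟨n, hn⟩ := hf i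
  exact hn ▸ hS.iterate n hi

/-! ### Determinants of functional matrices -/

lemma det_parentMatrix_of_reaches [Fintype V] [DecidableEq V] {v : V} {f : V → V}
    (hloop : ∀ i, i ≠ v → f i ≠ i) (hf : Reaches v f) : (parentMatrix v f).det = 1 := by
  rw [Matrix.det_apply', Finset.sum_eq_single 1]
  · have h : ∀ i, parentMatrix v f i i = 1 := by
      intro i
      by_cases hi : i = v
      · simp [parentMatrix, hi]
      · simp [parentMatrix, hi, hloop i hi]
    simp [h]
  · intro σ _ hσ
    by_contra hne
    have hprod : ∏ i, parentMatrix v f (σ i) i ≠ 0 := right_ne_zero_of_mul hne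
    rw [Finset.prod_ne_zero_iff] at hprod
    have key : ∀ i, σ i ≠ i → σ i ≠ v ∧ f (σ i) = i := by
      intro i hi
      by_contra hcon
      exact hprod i (Finset.mem_univ i) (by
        simp only [parentMatrix, Matrix.of_apply]
        rw [if_neg hi, if_neg hcon, sub_zero])
    -- On its non-fixed points `σ⁻¹` agrees with `f`, so these form an `f`-invariant set avoiding `v`.
    have key' : ∀ x, σ x ≠ x → x ≠ v ∧ f x = σ.symm x := by
      intro x hx
      have h := key (σ.symm x) (by
        rw [Equiv.apply_symm_apply]
        intro h
        exact hx ((Equiv.eq_symm_apply σ).1 h))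
      rwa [Equiv.apply_symm_apply] at h
    obtain ⟨x, hx⟩ : ∃ x, σ x ≠ x := by
      by_contra! hall
      exact hσ (Equiv.ext hall)
    have hv : v ∈ {x | σ x ≠ x} := hf.mem_of_mapsTo (fun y hy => by
      change σ (f y) ≠ f y
      rw [(key' y hy).2, Equiv.apply_symm_apply]
      intro h
      exact hy ((Equiv.eq_symm_apply σ).1 h)) hx
    exact (key' v hv).1 rfl
  · simp

lemma det_parentMatrix_of_not_reaches [Fintype V] [DecidableEq V] {v : V} {f : V → V}
    (hf : ¬ Reaches v f) : (parentMatrix v f).det = 0 := by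
  classical
  rw [← Matrix.exists_mulVec_eq_zero_iff]
  unfold Reaches at hf
  push Not at hf
  obtain ⟨i₀, hi₀⟩ := hf
  refine ⟨fun i => if ∀ n : ℕ, f^[n] i ≠ v then 1 else 0, fun h => ?_, ?_⟩
  · have := congrFun h i₀
    rw [if_pos hi₀] at this
    exact one_ne_zero this
  · ext i
    simp only [Matrix.mulVec, dotProduct, parentMatrix, Matrix.of_apply, sub_mul, ite_mul, one_mul,
      zero_mul, Finset.sum_sub_distrib, Finset.sum_ite_eq, Finset.mem_univ, if_true,
      Pi.zero_apply]
    by_cases hi : i = v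
    · have : ¬ ∀ n : ℕ, f^[n] i ≠ v := fun h => h 0 hi
      simp only [hi] at this
      simp [hi, this]
    · have : (∀ n : ℕ, f^[n] i ≠ v) ↔ ∀ n : ℕ, f^[n] (f i) ≠ v := by
        refine ⟨fun h n => h (n + 1), fun h n => ?_⟩
        cases n with
        | zero => exact hi
        | succ n => exact h n
      simp [hi, this]

/-! ### Parent maps and spanning trees -/

lemma parentGraph_adj {f : V → V} {a b : V} :
    (parentGraph f).Adj a b ↔ a ≠ b ∧ (f a = b ∨ f b = a) := Iff.rfl

lemma parentGraph_le {G : SimpleGraph V} {v : V} {f : V → V} (hv : f v = v)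
    (hadj : ∀ i, i ≠ v → G.Adj i (f i)) : parentGraph f ≤ G := by
  have key : ∀ a b, a ≠ b → f a = b → G.Adj a b := by
    rintro a b hab rfl
    exact hadj a (fun h => hab (by rw [h, hv]))
  rintro a b ⟨hab, h | h⟩
  · exact key a b hab h
  · exact (key b a hab.symm h).symm

lemma parentGraph_connected {v : V} {f : V → V} (hf : Reaches v f) :
    (parentGraph f).Connected := by
  have key : ∀ (n : ℕ) (i : V), f^[n] i = v → (parentGraph f).Reachable i v := by
    intro n
    induction n with
    | zero => rintro i rfl; exact SimpleGraph.Reachable.refl _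
    | succ n ih =>
      intro i hi
      have h := ih (f i) hi
      by_cases hfi : i = f i
      · rwa [← hfi] at h
      · exact (SimpleGraph.Adj.reachable (parentGraph_adj.2 ⟨hfi, Or.inl rfl⟩)).trans h
  have : Nonempty V := ⟨v⟩
  refine SimpleGraph.Connected.mk fun a b => ?_
  obtain ⟨n, hn⟩ := hf a
  obtain ⟨k, hk⟩ := hf b
  exact (key n a hn).trans (key k b hk).symm

/-- The parent graph is connected with at most `|V| - 1` edges `{i, f i}`, `i ≠ v`. -/
lemma parentGraph_isTree [Finite V] {v : V} {f : V → V} (hv : f v = v) (hf : Reaches v f) :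
    (parentGraph f).IsTree := by
  have hc := parentGraph_connected hf
  rw [SimpleGraph.isTree_iff_connected_and_card]
  refine ⟨hc, le_antisymm ?_ hc.card_vert_le_card_edgeSet_add_one⟩
  have hsub : (parentGraph f).edgeSet ⊆ (fun i => s(i, f i)) '' ({v}ᶜ : Set V) := by
    intro e
    induction e with
    | _ a b =>
      rintro ⟨hab, h | h⟩
      · exact ⟨a, fun ha : a = v => hab (by rw [← h, ha, hv]), by simp [h]⟩
      · exact ⟨b, fun hb : b = v => hab (by rw [← h, hb, hv]), by simp [h, Sym2.eq_swap]⟩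
  have h1 : (parentGraph f).edgeSet.ncard ≤ ({v}ᶜ : Set V).ncard :=
    (Set.ncard_le_ncard hsub).trans (Set.ncard_image_le (Set.toFinite _))
  have h2 := Set.ncard_add_ncard_compl ({v} : Set V)
  rw [Set.ncard_singleton] at h2
  rw [Nat.card_coe_set_eq]
  omega

lemma parentGraph_injOn (G : SimpleGraph V) (v : V) :
    Set.InjOn parentGraph {f | IsParentMap G v f} := by
  rintro f ⟨hfv, hfa, hfr⟩ g ⟨hgv, hga, hgr⟩ hfg
  have key : ∀ (n : ℕ) (i : V), f^[n] i = v → f i = g i := by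
    intro n
    induction n with
    | zero => rintro i rfl; exact hfv.trans hgv.symm
    | succ n ih =>
      intro i hi
      have h := ih (f i) hi
      by_cases hiv : i = v
      · rw [hiv, hfv, hgv]
      have hadj : (parentGraph g).Adj i (f i) :=
        hfg ▸ parentGraph_adj.2 ⟨(hfa i hiv).ne, Or.inl rfl⟩
      rcases (parentGraph_adj.1 hadj).2 with hgi | hgi
      · exact hgi.symm
      -- Otherwise `i` and `f i` form a 2-cycle of `f`, which cannot reach `v`.
      · rw [← h] at hgi
        have hmem : v ∈ ({i, f i} : Set V) := hfr.mem_of_mapsTo (by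
          rintro x (rfl | rfl)
          · exact Or.inr rfl
          · exact Or.inl hgi) (Or.inl rfl)
        rcases hmem with hm | hm
        · exact absurd hm.symm hiv
        · rw [← hm, hfv] at hgi
          exact absurd hgi.symm hiv
  funext i
  obtain ⟨n, hn⟩ := hfr i
  exact key n i hn

/-- In a connected graph, moving every vertex to a neighbour closer to `v` reaches `v`. -/
lemma exists_isParentMap {T : SimpleGraph V} (hT : T.Connected) (v : V) :
    ∃ f, IsParentMap T v f := by
  have hex : ∀ i, ∃ w, (i = v → w = v) ∧ (i ≠ v → T.Adj i w ∧ T.dist w v < T.dist i v) := by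
    intro i
    by_cases hi : i = v
    · exact ⟨v, fun _ => rfl, fun h => absurd hi h⟩
    · obtain ⟨p, hp⟩ := hT.exists_walk_length_eq_dist i v
      cases p with
      | nil => exact absurd rfl hi
      | @cons _ w _ h q =>
        refine ⟨w, fun h => absurd h hi, fun _ => ⟨h, ?_⟩⟩
        have := SimpleGraph.dist_le q
        rw [SimpleGraph.Walk.length_cons] at hp
        omega
  choose f hf₁ hf₂ using hex
  refine ⟨f, hf₁ v rfl, fun i hi => (hf₂ i hi).1, ?_⟩
  have key : ∀ (d : ℕ) (i : V), T.dist i v ≤ d → ∃ n : ℕ, f^[n] i = v := by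
    intro d
    induction d with
    | zero => exact fun i hi => ⟨0, hT.dist_eq_zero_iff.1 (Nat.le_zero.1 hi)⟩
    | succ d ih =>
      intro i hi
      by_cases hiv : i = v
      · exact ⟨0, hiv⟩
      · have := (hf₂ i hiv).2
        obtain ⟨n, hn⟩ := ih (f i) (by omega)
        exact ⟨n + 1, hn⟩
  exact fun i => key _ i le_rfl

lemma bijOn_parentGraph [Finite V] (G : SimpleGraph V) (v : V) :
    Set.BijOn parentGraph {f | IsParentMap G v f}
      {H : SimpleGraph V | H ≤ G ∧ H.Connected ∧ H.IsAcyclic} := by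
  refine ⟨?_, parentGraph_injOn G v, ?_⟩
  · rintro f ⟨hv, ha, hr⟩
    have ht := parentGraph_isTree hv hr
    exact ⟨parentGraph_le hv ha, ht.1, ht.2⟩
  · rintro T ⟨hTG, hTc, hTa⟩
    obtain ⟨f, hv, ha, hr⟩ := exists_isParentMap hTc v
    refine ⟨f, ⟨hv, fun i hi => hTG (ha i hi), hr⟩, ?_⟩
    -- A tree is minimal among connected graphs.
    have hmin := SimpleGraph.isTree_iff_minimal_connected.1 ⟨hTc, hTa⟩
    exact hmin.eq_of_le (parentGraph_connected hr) (parentGraph_le hv ha)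

/-! ### Principal minors of the Laplacian -/

lemma minor_lapMatrix [Fintype V] [DecidableEq V] (G : SimpleGraph V) [DecidableRel G.Adj]
    (v : V) (s : Finset V) (hs : s = {v}ᶜ) :
    ((G.lapMatrix ℝ).submatrix (Subtype.val : s → V) (Subtype.val : s → V)).det =
      ({H : SimpleGraph V | H ≤ G ∧ H.Connected ∧ H.IsAcyclic}.ncard : ℝ) := by
  classical
  rw [← Matrix.det_piecewise_one_eq_submatrix_det]
  -- The admissible values of `f i`.
  let A : V → Finset V := fun i => if i = v then {v} else G.neighborFinset i
  let R : V → V → V → ℝ := fun i w j =>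
    (if i = j then 1 else 0) - (if i ≠ v ∧ w = j then 1 else 0)
  have hrow : (Matrix.of <| s.piecewise (G.lapMatrix ℝ).row (1 : Matrix V V ℝ).row) =
      Matrix.of (fun i => ∑ w ∈ A i, R i w) := by
    ext i j
    simp only [Matrix.of_apply, Finset.sum_apply]
    by_cases hi : i = v
    · simp [hs, A, R, hi, Matrix.one_apply]
    · simp [hs, A, R, hi, SimpleGraph.lapMatrix, SimpleGraph.degMatrix, Matrix.diagonal_apply,
        SimpleGraph.adjMatrix_apply]
  have hexp : (Matrix.of (fun i => ∑ w ∈ A i, R i w)).det =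
      ∑ f ∈ Fintype.piFinset A, (parentMatrix v f).det :=
    (Matrix.detRowAlternating (n := V) (R := ℝ)).toMultilinearMap.map_sum_finset R A
  have hmem : ∀ f, f ∈ Fintype.piFinset A ↔ f v = v ∧ ∀ i, i ≠ v → G.Adj i (f i) := by
    intro f
    rw [Fintype.mem_piFinset]
    constructor
    · intro h
      refine ⟨by simpa [A] using h v, fun i hi => by simpa [A, hi] using h i⟩
    · rintro ⟨hv, h⟩ i
      by_cases hi : i = v
      · simp [A, hi, hv]
      · simpa [A, hi] using h i hi
  have hdet : ∀ f ∈ Fintype.piFinset A,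
      (parentMatrix v f).det = if Reaches v f then 1 else 0 := by
    intro f hf
    split_ifs with h
    · exact det_parentMatrix_of_reaches (fun i hi => (((hmem f).1 hf).2 i hi).ne') h
    · exact det_parentMatrix_of_not_reaches h
  rw [hrow, hexp, Finset.sum_congr rfl hdet, Finset.sum_boole, ← (bijOn_parentGraph G v).ncard_eq,
    ← Set.ncard_coe_finset]
  congr 2
  ext f
  simp only [Finset.coe_filter, hmem, Set.mem_ofPred_eq, IsParentMap, and_assoc]

end KirchhoffPdet

/-- Kirchhoff's matrix tree theorem via pseudo-determinants: for a connected finite simple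
graph `G` on a vertex set `V` with `m = |V| ≥ 1` and Laplacian matrix `L` over `ℝ`,
`(-1)^{m-1}` times the coefficient of `x^1` in the characteristic polynomial `det(x·I − L)`
(i.e. the pseudo-determinant `Det(L)`, the product of the `m − 1` nonzero eigenvalues of `L`)
equals `m` times the number of spanning trees of `G`, where a spanning tree is a simple graph
`H` on `V` with `H ≤ G` which is connected and acyclic. -/
theorem kirchhoff_pdet {V : Type*} [Fintype V] [DecidableEq V] (G : SimpleGraph V)
    [DecidableRel G.Adj] (hG : G.Connected) (hm : 1 ≤ Fintype.card V) :
    (-1 : ℝ) ^ (Fintype.card V - 1) * (G.lapMatrix ℝ).charpoly.coeff 1 =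
      (Fintype.card V : ℝ) *
        ({H : SimpleGraph V | H ≤ G ∧ H.Connected ∧ H.IsAcyclic}.ncard : ℝ) := by
  have hcoeff := Matrix.charpoly_coeff_eq_sum_minors (G.lapMatrix ℝ) (Fintype.card V - 1)
    (Nat.sub_le _ _)
  rw [Nat.sub_sub_self hm] at hcoeff
  have hminor : ∀ s ∈ (Finset.univ : Finset V).powersetCard (Fintype.card V - 1),
      ((G.lapMatrix ℝ).submatrix (Subtype.val : s → V) (Subtype.val : s → V)).det =
      ({H : SimpleGraph V | H ≤ G ∧ H.Connected ∧ H.IsAcyclic}.ncard : ℝ) := by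
    intro s hs
    have hcard : sᶜ.card = 1 := by
      rw [Finset.card_compl, (Finset.mem_powersetCard.1 hs).2, Nat.sub_sub_self hm]
    obtain ⟨v, hv⟩ := Finset.card_eq_one.1 hcard
    exact KirchhoffPdet.minor_lapMatrix G v s (by rw [← hv, compl_compl])
  rw [hcoeff, Finset.sum_congr rfl hminor, ← mul_assoc, ← mul_pow, Finset.sum_const,
    Finset.card_powersetCard, Finset.card_univ, Nat.choose_symm hm, Nat.choose_one_right]
  simp
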